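/- Let s_I be any pure strategy of Player I and let p be a finite binary sequence of even length 2k. Then P_{s_I}(⟦𝕐_p⟧) ≤ 2^(−k). -/

import Mathlib

open Metric Set Filter MeasureTheory

noncomputable local instance : MetricSpace (ℕ → Bool) := PiNat.metricSpace

/-- The cylinder `⟦𝕐_p⟧` of all plays extending the finite binary sequence `p`. -/
def cyl (p : List Bool) : Set (ℕ → Bool) := {x : ℕ → Bool | ∀ i : Fin p.length, x i = p.get i}

/-- The play produced when Player I follows the strategy `s` and Player II plays the odd
coordinates of `b`. -/
noncomputable def phi (s : List Bool → Bool) (b : ℕ → Bool) : ℕ → Bool := fun n =>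
  Nat.strongRecOn n fun n ih =>
    if Even n then s (List.ofFn fun i : Fin n => ih i i.isLt) else b n

/-- `μ` is the infinite product over `ℕ` of the uniform probability measure on `{0,1}`. -/
def IsUniformProduct (μ : Measure (ℕ → Bool)) : Prop :=
  ∀ (s : Finset ℕ) (f : ℕ → Bool), μ {b : ℕ → Bool | ∀ i ∈ s, b i = f i} = (1 / 2) ^ s.card

theorem phi_of_odd (s : List Bool → Bool) (b : ℕ → Bool) {n : ℕ} (hn : Odd n) :
    phi s b n = b n := by
  unfold phi
  rw [Nat.strongRecOn_eq, if_neg (Nat.not_even_iff_odd.mpr hn)]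

theorem measurableSet_cyl (p : List Bool) : MeasurableSet (cyl p) := by
  simp only [cyl, ofPred_forall]
  exact MeasurableSet.iInter fun i =>
    measurableSet_eq_fun (measurable_pi_apply (i : ℕ)) measurable_const

theorem preimage_phi_cyl_subset (s : List Bool → Bool) (p : List Bool) (k : ℕ)
    (hp : 2 * k ≤ p.length) :
    phi s ⁻¹' cyl p ⊆
      {b | ∀ i ∈ (Finset.range k).image (fun j => 2 * j + 1), b i = p.getD i false} := by
  intro b hb i hi
  obtain ⟨j, hj, rfl⟩ := Finset.mem_image.mp hi
  have hlt : 2 * j + 1 < p.length := by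
    have := Finset.mem_range.mp hj
    omega
  rw [← phi_of_odd s b (odd_two_mul_add_one j), List.getD_eq_getElem _ _ hlt]
  exact hb ⟨2 * j + 1, hlt⟩

/-- For every Player I strategy `sI` and every cylinder on a prefix `p` of even length `2k`,
the law `P_{sI}` of the play against fair coin tosses gives the cylinder measure at
most `2^(-k)`. -/
theorem law_cylinder_le (sI : List Bool → Bool) (μ : Measure (ℕ → Bool))
    (hμ : IsUniformProduct μ) (p : List Bool) (k : ℕ) (hp : p.length = 2 * k) :
    μ.map (phi sI) (cyl p) ≤ (1 / 2) ^ k := by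
  by_cases h : AEMeasurable (phi sI) μ
  · rw [Measure.map_apply_of_aemeasurable h (measurableSet_cyl p)]
    refine (measure_mono (preimage_phi_cyl_subset sI p k hp.ge)).trans_eq ?_
    rw [hμ, Finset.card_image_of_injective _ fun a b hab => by simpa using hab,
      Finset.card_range]
  · simp [Measure.map_of_not_aemeasurable h]
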